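/- Let u, v ∈ C²(B̄_1) be harmonic in B_1 \ {0} (B_1 the unit disc in R²), and for 0 < d < 1 define P_d(u,v) = −2d ∫_{∂B_d} ⟨∇u,ν⟩⟨∇v,ν⟩ dσ + d ∫_{∂B_d} ⟨∇u,∇v⟩ dσ, where ν is the outward unit normal of ∂B_d. Then P_d(u,v) is independent of d ∈ (0,1). -/

import Mathlib

open Metric MeasureTheory RealInnerProductSpace

noncomputable section

/-- The Euclidean Laplacian on `ℝ²`, as the sum of second partial derivatives. -/
def lap (f : EuclideanSpace ℝ (Fin 2) → ℝ) (x : EuclideanSpace ℝ (Fin 2)) : ℝ :=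
  ∑ i : Fin 2,
    fderiv ℝ (fun y => fderiv ℝ f y (EuclideanSpace.single i 1)) x (EuclideanSpace.single i 1)

/-- The quadratic boundary form
`P_d(u,v) = -2d ∫_{∂B_d} ⟨∇u,ν⟩⟨∇v,ν⟩ dσ + d ∫_{∂B_d} ⟨∇u,∇v⟩ dσ`. -/
def quadP (u v : EuclideanSpace ℝ (Fin 2) → ℝ) (d : ℝ) : ℝ :=
  -2 * d * (∫ x in sphere (0 : EuclideanSpace ℝ (Fin 2)) d,
      ⟪gradient u x, ‖x‖⁻¹ • x⟫ * ⟪gradient v x, ‖x‖⁻¹ • x⟫ ∂(μH[1]))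
    + d * ∫ x in sphere (0 : EuclideanSpace ℝ (Fin 2)) d,
        ⟪gradient u x, gradient v x⟫ ∂(μH[1])

/-!
Identify `ℝ²` with `ℂ`. If `u` is harmonic, then `conj (∇ u) = ∂₁u - i ∂₂u` is holomorphic, and
hence so is `W z = z² conj (∇ u z) conj (∇ v z)`. On the circle of radius `d` the integrand of
`P_d(u,v)` is `-d⁻¹ Re W`, and arclength is `d` times a fixed multiple of the angular measure, so
`P_d(u,v)` is a fixed multiple of the mean of `Re W` over that circle. By Cauchy's theorem on an
annulus this mean is the same for all radii, whatever the singularity at the origin.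
-/

section HausdorffMeasure

open Real
open scoped Pointwise

theorem setIntegral_sphere_comp_isometryEquiv {X Y E : Type*}
    [MetricSpace X] [MeasurableSpace X] [BorelSpace X]
    [MetricSpace Y] [MeasurableSpace Y] [BorelSpace Y] [NormedAddCommGroup E] [NormedSpace ℝ E]
    (e : X ≃ᵢ Y) (s : ℝ) (f : Y → E) (x : X) (r : ℝ) :
    ∫ z in sphere x r, f (e z) ∂μH[s] = ∫ y in sphere (e x) r, f y ∂μH[s] := by
  have h := (e.measurePreserving_hausdorffMeasure s).setIntegral_preimage_emb
    e.toHomeomorph.measurableEmbedding f (sphere (e x) r)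
  rwa [e.preimage_sphere, e.symm_apply_apply] at h

theorem measureReal_hausdorffMeasure_sphere_zero {E : Type*} [NormedAddCommGroup E]
    [NormedSpace ℝ E] [MeasurableSpace E] [BorelSpace E] {s r : ℝ} (hs : 0 ≤ s) (hr : 0 < r) :
    (μH[s] : Measure E).real (sphere 0 r) = r ^ s * (μH[s] : Measure E).real (sphere 0 1) := by
  have hsphere : sphere (0 : E) r = r • sphere (0 : E) 1 := by
    rw [smul_sphere' hr.ne', smul_zero, mul_one, Real.norm_of_nonneg hr.le]
  rw [hsphere, measureReal_def, Measure.hausdorffMeasure_smul₀ hs hr.ne', measureReal_def,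
    ENNReal.toReal_smul]
  simp [NNReal.smul_def, abs_of_pos hr]

theorem hausdorffMeasure_one_sphere_lt_top (c : ℂ) (r : ℝ) : μH[1] (sphere c r) < ⊤ := by
  rcases lt_or_ge r 0 with hr | hr
  · simp [sphere_eq_empty_of_neg hr]
  have h := (lipschitzWith_circleMap c r).hausdorffMeasure_image_le zero_le_one
    (Set.Ioc 0 (2 * π))
  rw [image_circleMap_Ioc, abs_of_nonneg hr, hausdorffMeasure_real] at h
  exact h.trans_lt (ENNReal.mul_lt_top (by simp) measure_Ioc_lt_top)

instance isFiniteMeasure_hausdorffMeasure_one_restrict_sphere (c : ℂ) (r : ℝ) :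
    IsFiniteMeasure ((μH[1] : Measure ℂ).restrict (sphere c r)) :=
  ⟨by simpa using hausdorffMeasure_one_sphere_lt_top c r⟩

variable {E : Type*} [NormedAddCommGroup E]

theorem integrableOn_sphere_hausdorffMeasure_one {f : ℂ → E} {c : ℂ} {r : ℝ}
    (hf : ContinuousOn f (sphere c r)) : IntegrableOn f (sphere c r) μH[1] :=
  hf.integrableOn_of_subset_isCompact (isCompact_sphere c r) isClosed_sphere.measurableSet
    subset_rfl (hausdorffMeasure_one_sphere_lt_top c r).ne

theorem integrable_comp_circleMap_mul {f : ℂ → E} {r : ℝ} (hf : ContinuousOn f (sphere 0 r)) :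
    Integrable (Function.uncurry fun (θ : ℝ) z => f (circleMap 0 1 θ * z))
      ((volume.restrict (Set.uIoc 0 (2 * π))).prod
        ((μH[1] : Measure ℂ).restrict (sphere 0 r))) := by
  set ν : Measure ℂ := (μH[1] : Measure ℂ).restrict (sphere 0 r) with hν
  have hcont : ContinuousOn (Function.uncurry fun (θ : ℝ) z => f (circleMap 0 1 θ * z))
      (Set.uIcc 0 (2 * π) ×ˢ sphere (0 : ℂ) r) := by
    refine hf.comp (by fun_prop) ?_
    rintro ⟨θ, z⟩ ⟨-, hz⟩
    simpa using hz
  have hint : IntegrableOn _ _ ((volume : Measure ℝ).prod ν) :=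
    hcont.integrableOn_compact (isCompact_uIcc.prod (isCompact_sphere 0 r))
  rw [IntegrableOn, ← Measure.prod_restrict, hν,
    Measure.restrict_restrict isClosed_sphere.measurableSet, Set.inter_self] at hint
  exact hint.mono_measure
    (Measure.prod_mono (Measure.restrict_mono Set.uIoc_subset_uIcc le_rfl) le_rfl)

variable [NormedSpace ℝ E]

theorem setIntegral_sphere_circle_mul (f : ℂ → E) (r : ℝ) (a : Circle) :
    ∫ z in sphere (0 : ℂ) r, f (a * z) ∂μH[1] = ∫ z in sphere (0 : ℂ) r, f z ∂μH[1] := by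
  simpa using setIntegral_sphere_comp_isometryEquiv (rotation a).toIsometryEquiv 1 f 0 r

theorem circleAverage_comp_mul_right (f : ℂ → E) (z : ℂ) :
    circleAverage (fun w => f (w * z)) 0 1 = circleAverage f 0 ‖z‖ := by
  have hz (θ : ℝ) : circleMap 0 1 θ * z = circleMap 0 ‖z‖ (θ + Complex.arg z) := by
    conv_lhs => rw [← Complex.norm_mul_exp_arg_mul_I z]
    simp only [circleMap, zero_add, Complex.ofReal_add, add_mul, Complex.exp_add,
      Complex.ofReal_one, one_mul]
    ring
  simp only [circleAverage_eq_integral_add (f := f) (Complex.arg z), circleAverage_def, hz]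

-- Arclength is rotation invariant, so the left side is its own average over all rotations of `f`;
-- exchanging the two integrals turns this into an average of `f` over each orbit.
theorem setIntegral_sphere_hausdorffMeasure_one [CompleteSpace E] {f : ℂ → E} {r : ℝ}
    (hf : ContinuousOn f (sphere 0 r)) :
    ∫ z in sphere (0 : ℂ) r, f z ∂μH[1] =
      (μH[1] : Measure ℂ).real (sphere 0 r) • circleAverage f 0 r :=
  calc ∫ z in sphere (0 : ℂ) r, f z ∂μH[1]
    _ = circleAverage (fun w => ∫ z in sphere (0 : ℂ) r, f (w * z) ∂μH[1]) 0 1 := by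
      refine (circleAverage_const_on_circle fun w hw => ?_).symm
      have hw' : w ∈ Submonoid.unitSphere ℂ := by simpa [Submonoid.unitSphere] using hw
      exact setIntegral_sphere_circle_mul f r ⟨w, hw'⟩
    _ = ∫ z in sphere (0 : ℂ) r, circleAverage (fun w => f (w * z)) 0 1 ∂μH[1] := by
      simp only [circleAverage_def, integral_smul]
      rw [intervalIntegral_integral_swap (integrable_comp_circleMap_mul hf)]
    _ = ∫ _ in sphere (0 : ℂ) r, circleAverage f 0 r ∂μH[1] := by
      refine setIntegral_congr_fun isClosed_sphere.measurableSet fun z hz => ?_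
      rw [← mem_sphere_zero_iff_norm.mp hz]
      exact circleAverage_comp_mul_right f z
    _ = (μH[1] : Measure ℂ).real (sphere 0 r) • circleAverage f 0 r := setIntegral_const _

end HausdorffMeasure

section Annulus

open Real

theorem circleAverage_eq_of_differentiableOn_annulus {E : Type*} [NormedAddCommGroup E]
    [NormedSpace ℂ E] {f : ℂ → E} {c : ℂ} {r R : ℝ} (hr : 0 ≤ r)
    (hf : DifferentiableOn ℂ f (ball c R \ closedBall c r)) {d₁ d₂ : ℝ}
    (hd₁ : d₁ ∈ Set.Ioo r R) (hd₂ : d₂ ∈ Set.Ioo r R) :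
    circleAverage f c d₁ = circleAverage f c d₂ := by
  wlog hle : d₁ ≤ d₂ generalizing d₁ d₂
  · exact (this hd₂ hd₁ (le_of_not_ge hle)).symm
  have hpos : 0 < d₁ := hr.trans_lt hd₁.1
  have hsub : closedBall c d₂ \ ball c d₁ ⊆ ball c R \ closedBall c r :=
    Set.sdiff_subset_sdiff (closedBall_subset_ball hd₂.2) (closedBall_subset_ball hd₁.1)
  have hopen : IsOpen (ball c R \ closedBall c r) := isOpen_ball.sdiff isClosed_closedBall
  rw [circleAverage_eq_circleIntegral hpos.ne',
    circleAverage_eq_circleIntegral (hpos.trans_le hle).ne',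
    Complex.circleIntegral_sub_center_inv_smul_eq_of_differentiable_on_annulus_off_countable
      hpos hle Set.countable_empty (hf.continuousOn.mono hsub) fun z hz =>
        hf.differentiableAt (hopen.mem_nhds (hsub ?_))]
  exact Set.sdiff_subset_sdiff ball_subset_closedBall ball_subset_closedBall hz.1

end Annulus

section LinearIsometryEquiv

open InnerProductSpace Laplacian Topology

variable {E F G : Type*} [NormedAddCommGroup E] [InnerProductSpace ℝ E]
  [NormedAddCommGroup F] [InnerProductSpace ℝ F] [NormedAddCommGroup G] [NormedSpace ℝ G]

theorem gradient_comp_linearIsometryEquiv [CompleteSpace E] [CompleteSpace F] (f : F → ℝ)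
    (e : E ≃ₗᵢ[ℝ] F) (x : E) : gradient (f ∘ e) x = e.symm (gradient f (e x)) := by
  refine ext_inner_right ℝ fun y => ?_
  have hfderiv := e.toContinuousLinearEquiv.comp_right_fderiv (f := f) (x := x)
  rw [inner_gradient_left, e.symm.inner_map_eq_flip, inner_gradient_left]
  exact congrArg (fun L => L y) hfderiv

variable [FiniteDimensional ℝ E] [FiniteDimensional ℝ F]

theorem laplacian_comp_linearIsometryEquiv (f : F → G) (e : E ≃ₗᵢ[ℝ] F) :
    Δ (f ∘ e) = Δ f ∘ e := by
  ext x
  let b := stdOrthonormalBasis ℝ E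
  rw [laplacian_eq_iteratedFDeriv_orthonormalBasis _ b, Function.comp_apply,
    laplacian_eq_iteratedFDeriv_orthonormalBasis _ (b.map e)]
  refine Finset.sum_congr rfl fun i _ => ?_
  have hcomp : iteratedFDeriv ℝ 2 (f ∘ e) x =
      (iteratedFDeriv ℝ 2 f (e x)).compContinuousLinearMap fun _ => ↑e.toContinuousLinearEquiv := by
    rw [← iteratedFDerivWithin_univ, ← iteratedFDerivWithin_univ]
    exact e.toContinuousLinearEquiv.iteratedFDerivWithin_comp_right f uniqueDiffOn_univ
      (Set.mem_univ _) 2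
  rw [hcomp, ContinuousMultilinearMap.compContinuousLinearMap_apply]
  congr 1
  ext j : 1
  fin_cases j <;> simp [b]

theorem harmonicAt_comp_linearIsometryEquiv {f : F → G} {e : E ≃ₗᵢ[ℝ] F} {x : E}
    (hf : HarmonicAt f (e x)) : HarmonicAt (f ∘ e) x := by
  refine ⟨hf.1.comp x e.contDiff.contDiffAt, ?_⟩
  rw [laplacian_comp_linearIsometryEquiv]
  exact e.continuous.continuousAt.eventually hf.2

theorem harmonicOnNhd_comp_linearIsometryEquiv {f : F → G} {s : Set F} (hf : HarmonicOnNhd f s)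
    (e : E ≃ₗᵢ[ℝ] F) : HarmonicOnNhd (f ∘ e) (e ⁻¹' s) :=
  fun x hx => harmonicAt_comp_linearIsometryEquiv (hf (e x) hx)

end LinearIsometryEquiv

section Complex

open InnerProductSpace ComplexConjugate

theorem conj_gradient_eq_fderiv (u : ℂ → ℝ) (z : ℂ) :
    conj (gradient u z) = fderiv ℝ u z 1 - Complex.I * fderiv ℝ u z Complex.I := by
  rw [← inner_gradient_left, ← inner_gradient_left, Complex.inner, Complex.inner]
  apply Complex.ext <;> simp

theorem differentiableAt_conj_gradient {u : ℂ → ℝ} {z : ℂ} (hu : HarmonicAt u z) :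
    DifferentiableAt ℂ (fun w => conj (gradient u w)) z := by
  simp only [conj_gradient_eq_fderiv]
  exact HarmonicAt.differentiableAt_complex_partial hu

theorem continuousOn_gradient {u : ℂ → ℝ} {s : Set ℂ} (hu : HarmonicOnNhd u s) :
    ContinuousOn (gradient u) s := fun z hz => by
  simpa using (differentiableAt_conj_gradient (hu z hz)).continuousAt.star.continuousWithinAt

/-- `W z = z² (∂₁u - i ∂₂u) (∂₁v - i ∂₂v)`, the holomorphic function attached to two harmonic
functions on the plane; the factor `∂₁u - i ∂₂u` is encoded as the conjugate of the gradient. It is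
the polarized Hopf differential of `u` and `v` in the coordinate `log z`, up to a constant. -/
def hopfProduct (u v : ℂ → ℝ) (z : ℂ) : ℂ :=
  z ^ 2 * (conj (gradient u z) * conj (gradient v z))

theorem re_hopfProduct (u v : ℂ → ℝ) (z : ℂ) :
    (hopfProduct u v z).re =
      2 * (⟪gradient u z, z⟫ * ⟪gradient v z, z⟫) - ‖z‖ ^ 2 * ⟪gradient u z, gradient v z⟫ := by
  rw [← Complex.normSq_eq_norm_sq]
  simp only [hopfProduct, Complex.inner, Complex.normSq_apply, pow_two, Complex.mul_re,
    Complex.mul_im, Complex.conj_re, Complex.conj_im]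
  ring

theorem continuousOn_hopfProduct {u v : ℂ → ℝ} {s : Set ℂ} (hu : ContinuousOn (gradient u) s)
    (hv : ContinuousOn (gradient v) s) : ContinuousOn (hopfProduct u v) s :=
  (continuousOn_id.pow 2).mul (hu.star.mul hv.star)

theorem differentiableOn_hopfProduct {u v : ℂ → ℝ} {s : Set ℂ} (hu : HarmonicOnNhd u s)
    (hv : HarmonicOnNhd v s) : DifferentiableOn ℂ (hopfProduct u v) s := fun z hz =>
  ((differentiableAt_id.pow 2).mul ((differentiableAt_conj_gradient (hu z hz)).mul
    (differentiableAt_conj_gradient (hv z hz)))).differentiableWithinAt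

end Complex

section Plane

open InnerProductSpace Laplacian Real

theorem lap_eq_laplacian {u : EuclideanSpace ℝ (Fin 2) → ℝ} {x : EuclideanSpace ℝ (Fin 2)}
    (hu : ContDiffAt ℝ 2 u x) : lap u x = Δ u x := by
  have hdiff : DifferentiableAt ℝ (fderiv ℝ u) x :=
    (hu.fderiv_right (m := 1) (by norm_num)).differentiableAt one_ne_zero
  rw [laplacian_eq_iteratedFDeriv_orthonormalBasis _ (EuclideanSpace.basisFun (Fin 2) ℝ), lap]
  refine Finset.sum_congr rfl fun i _ => ?_
  rw [iteratedFDeriv_two_apply, fderiv_clm_apply hdiff (by fun_prop)]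
  simp

theorem harmonicOnNhd_of_lap_eq_zero {u : EuclideanSpace ℝ (Fin 2) → ℝ}
    {s : Set (EuclideanSpace ℝ (Fin 2))} (hs : IsOpen s) (hu : ContDiffOn ℝ 2 u s)
    (hlap : ∀ x ∈ s, lap u x = 0) : HarmonicOnNhd u s := by
  refine fun x hx => ⟨hu.contDiffAt (hs.mem_nhds hx), ?_⟩
  filter_upwards [hs.mem_nhds hx] with y hy
  rw [← lap_eq_laplacian (hu.contDiffAt (hs.mem_nhds hy)), hlap y hy, Pi.zero_apply]

variable {u v : EuclideanSpace ℝ (Fin 2) → ℝ}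

theorem quadP_eq_comp_linearIsometryEquiv (u v : EuclideanSpace ℝ (Fin 2) → ℝ)
    (e : ℂ ≃ₗᵢ[ℝ] EuclideanSpace ℝ (Fin 2)) (d : ℝ) :
    quadP u v d =
      -2 * d * (∫ z in sphere (0 : ℂ) d,
        ⟪gradient (u ∘ e) z, ‖z‖⁻¹ • z⟫ * ⟪gradient (v ∘ e) z, ‖z‖⁻¹ • z⟫ ∂μH[1])
      + d * ∫ z in sphere (0 : ℂ) d, ⟪gradient (u ∘ e) z, gradient (v ∘ e) z⟫ ∂μH[1] := by
  have hint (g : EuclideanSpace ℝ (Fin 2) → ℝ) :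
      ∫ x in sphere 0 d, g x ∂μH[1] = ∫ z in sphere (0 : ℂ) d, g (e z) ∂μH[1] := by
    simpa using (setIntegral_sphere_comp_isometryEquiv e.toIsometryEquiv 1 g 0 d).symm
  simp only [quadP, hint, gradient_comp_linearIsometryEquiv, e.symm.inner_map_eq_flip,
    LinearIsometryEquiv.symm_symm, map_smul, e.norm_map, e.apply_symm_apply]

theorem quadP_eq_setIntegral_hopfProduct {e : ℂ ≃ₗᵢ[ℝ] EuclideanSpace ℝ (Fin 2)} {d : ℝ}
    (hd : 0 < d) (hu : ContinuousOn (gradient (u ∘ e)) (sphere 0 d))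
    (hv : ContinuousOn (gradient (v ∘ e)) (sphere 0 d)) :
    quadP u v d = -d⁻¹ * (∫ z in sphere 0 d, hopfProduct (u ∘ e) (v ∘ e) z ∂μH[1]).re := by
  have hν : ContinuousOn (fun z : ℂ => ‖z‖⁻¹ • z) (sphere 0 d) :=
    (continuousOn_id.norm.inv₀ fun z hz => by simp [mem_sphere_zero_iff_norm.mp hz, hd.ne']).smul
      continuousOn_id
  have hnormal : IntegrableOn (fun z =>
      ⟪gradient (u ∘ e) z, ‖z‖⁻¹ • z⟫ * ⟪gradient (v ∘ e) z, ‖z‖⁻¹ • z⟫) (sphere 0 d) μH[1] :=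
    integrableOn_sphere_hausdorffMeasure_one ((hu.inner hν).mul (hv.inner hν))
  have hfull : IntegrableOn (fun z => ⟪gradient (u ∘ e) z, gradient (v ∘ e) z⟫) (sphere 0 d)
      μH[1] := integrableOn_sphere_hausdorffMeasure_one (hu.inner hv)
  have hhopf := integrableOn_sphere_hausdorffMeasure_one (continuousOn_hopfProduct hu hv)
  rw [quadP_eq_comp_linearIsometryEquiv u v e, ← integral_const_mul, ← integral_const_mul,
    ← integral_add (hnormal.const_mul _) (hfull.const_mul _), ← RCLike.re_eq_complex_re,
    ← integral_re hhopf, ← integral_const_mul]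
  refine setIntegral_congr_fun isClosed_sphere.measurableSet fun z hz => ?_
  simp only [RCLike.re_eq_complex_re, re_hopfProduct, real_inner_smul_right,
    mem_sphere_zero_iff_norm.mp hz]
  field_simp
  ring

theorem quadP_eq_circleAverage_hopfProduct {e : ℂ ≃ₗᵢ[ℝ] EuclideanSpace ℝ (Fin 2)} {d : ℝ}
    (hd : 0 < d) (hu : ContinuousOn (gradient (u ∘ e)) (sphere 0 d))
    (hv : ContinuousOn (gradient (v ∘ e)) (sphere 0 d)) :
    quadP u v d = -(μH[1] : Measure ℂ).real (sphere 0 1) *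
      (circleAverage (hopfProduct (u ∘ e) (v ∘ e)) 0 d).re := by
  rw [quadP_eq_setIntegral_hopfProduct hd hu hv,
    setIntegral_sphere_hausdorffMeasure_one (continuousOn_hopfProduct hu hv),
    measureReal_hausdorffMeasure_sphere_zero zero_le_one hd, rpow_one, Complex.smul_re, smul_eq_mul]
  field_simp

theorem quadP_independent_of_radius_general (u v : EuclideanSpace ℝ (Fin 2) → ℝ) {r R : ℝ}
    (hr : 0 ≤ r)
    (hu : ContDiffOn ℝ 2 u (ball 0 R \ closedBall 0 r))
    (hv : ContDiffOn ℝ 2 v (ball 0 R \ closedBall 0 r))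
    (hu0 : ∀ x ∈ ball 0 R \ closedBall 0 r, lap u x = 0)
    (hv0 : ∀ x ∈ ball 0 R \ closedBall 0 r, lap v x = 0) :
    ∀ d₁ ∈ Set.Ioo r R, ∀ d₂ ∈ Set.Ioo r R, quadP u v d₁ = quadP u v d₂ := by
  intro d₁ hd₁ d₂ hd₂
  let e : ℂ ≃ₗᵢ[ℝ] EuclideanSpace ℝ (Fin 2) := Complex.orthonormalBasisOneI.repr
  have hannulus : e ⁻¹' (ball 0 R \ closedBall 0 r) = ball 0 R \ closedBall 0 r := by ext z; simp
  have hcomp {w : EuclideanSpace ℝ (Fin 2) → ℝ} (hw : ContDiffOn ℝ 2 w (ball 0 R \ closedBall 0 r))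
      (hw0 : ∀ x ∈ ball 0 R \ closedBall 0 r, lap w x = 0) :
      HarmonicOnNhd (w ∘ e) (ball 0 R \ closedBall 0 r) :=
    hannulus ▸ harmonicOnNhd_comp_linearIsometryEquiv
      (harmonicOnNhd_of_lap_eq_zero (isOpen_ball.sdiff isClosed_closedBall) hw hw0) e
  have hu' := hcomp hu hu0
  have hv' := hcomp hv hv0
  have hmean {d : ℝ} (hd : d ∈ Set.Ioo r R) : quadP u v d =
      -(μH[1] : Measure ℂ).real (sphere 0 1) *
        (circleAverage (hopfProduct (u ∘ e) (v ∘ e)) 0 d).re := by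
    have hsub : sphere (0 : ℂ) d ⊆ ball 0 R \ closedBall 0 r := fun z hz => by simp_all
    exact quadP_eq_circleAverage_hopfProduct (hr.trans_lt hd.1)
      ((continuousOn_gradient hu').mono hsub) ((continuousOn_gradient hv').mono hsub)
  rw [hmean hd₁, hmean hd₂, circleAverage_eq_of_differentiableOn_annulus hr
    (differentiableOn_hopfProduct hu' hv') hd₁ hd₂]

end Plane

/-- If `u, v ∈ C²(B̄₁)` are harmonic in `B₁ \ {0}`, then `P_d(u,v)` is
independent of `d ∈ (0,1)`. -/
theorem quadP_independent_of_radius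
    (u v : EuclideanSpace ℝ (Fin 2) → ℝ)
    (hu : ContDiffOn ℝ 2 u (closedBall (0 : EuclideanSpace ℝ (Fin 2)) 1))
    (hv : ContDiffOn ℝ 2 v (closedBall (0 : EuclideanSpace ℝ (Fin 2)) 1))
    (hu0 : ∀ x ∈ ball (0 : EuclideanSpace ℝ (Fin 2)) 1 \ {0}, lap u x = 0)
    (hv0 : ∀ x ∈ ball (0 : EuclideanSpace ℝ (Fin 2)) 1 \ {0}, lap v x = 0) :
    ∀ d₁ ∈ Set.Ioo (0 : ℝ) 1, ∀ d₂ ∈ Set.Ioo (0 : ℝ) 1,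
      quadP u v d₁ = quadP u v d₂ := by
  have hsub : ball (0 : EuclideanSpace ℝ (Fin 2)) 1 \ closedBall 0 0 ⊆ closedBall 0 1 :=
    Set.sdiff_subset.trans ball_subset_closedBall
  exact quadP_independent_of_radius_general u v le_rfl (hu.mono hsub) (hv.mono hsub)
    (by simpa using hu0) (by simpa using hv0)

end
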